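/- Let (X, μ) be a standard Borel space with a non-atomic Borel probability measure μ. For every k, m, n ∈ ℕ and every pair of finite sequences of indices 1 ≤ k₁, …, k_p ≤ m and 1 ≤ l₁, …, l_q ≤ n, the set E_k = {(f₁,…,f_m,g₁,…,g_n) ∈ L⁰(μ,𝕋)^{m+n} : ρ_{p,q}(f_{k₁},…,f_{k_p},g_{l₁},…,g_{l_q}) ≥ 1/k} is nowhere dense in L⁰(μ,𝕋)^{m+n}. -/

import Mathlib

open MeasureTheory Set

/-- The Borel σ-algebra on the circle group `𝕋 ⊆ ℂ`. -/
noncomputable instance : MeasurableSpace Circle := borel Circle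
instance : BorelSpace Circle := ⟨rfl⟩

/-- The metric `d(f,g) = ∫ |f − g| dμ` inducing the topology of convergence in measure
on `L⁰(μ, 𝕋)`. -/
noncomputable def L0dist {Y : Type*} [MeasurableSpace Y] (ν : Measure Y)
    (f g : Y →ₘ[ν] Circle) : ℝ :=
  ∫ x, ‖(f x : ℂ) - (g x : ℂ)‖ ∂ν

/-- The topology of convergence in measure on `L⁰(μ, 𝕋)`: the topology induced by the metric
`L0dist`, i.e. generated by the open balls of that metric. -/
noncomputable instance L0top {Y : Type*} [MeasurableSpace Y] (ν : Measure Y) :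
    TopologicalSpace (Y →ₘ[ν] Circle) :=
  TopologicalSpace.generateFrom
    {U | ∃ (f : Y →ₘ[ν] Circle) (ε : ℝ), 0 < ε ∧ U = {g | L0dist ν f g < ε}}

/-- The set of products `f₁(B)⋯f_m(B) = {f₁(x₁)⋯f_m(x_m) : x₁,…,x_m ∈ B}`. -/
def prodSet {X : Type*} {G : Type*} [Monoid G] {m : ℕ} (f : Fin m → X → G) (B : Set X) :
    Set G :=
  {g | ∃ x : Fin m → X, (∀ i, x i ∈ B) ∧ g = (List.ofFn fun i => f i (x i)).prod}

/-- `ρ_{m,n}(f₁,…,f_m,g₁,…,g_n)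
  = inf { μ(A) : A Borel, f₁(X∖A)⋯f_m(X∖A) ∩ g₁(X∖A)⋯g_n(X∖A) = ∅ }`. -/
noncomputable def rho {X : Type*} [MeasurableSpace X] {G : Type*} [Monoid G] {m n : ℕ}
    (μ : Measure X) (f : Fin m → X → G) (g : Fin n → X → G) : ℝ :=
  sInf {c : ℝ | ∃ A : Set X, MeasurableSet A ∧
    Disjoint (prodSet f Aᶜ) (prodSet g Aᶜ) ∧ c = (μ A).toReal}

/-!
Unless `p = q = 0`, there are `c`, `d` in the circle with `c ^ p ≠ d ^ q`. If every `fᵢ` takes its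
values in `S = {z | z ^ N = c}` and every `gⱼ` in `T = {z | z ^ N = d}`, then the products of `p`
values of the `fᵢ` are `N`-th roots of `c ^ p`, those of `q` values of the `gⱼ` are `N`-th roots of
`d ^ q`, and these never coincide. The disjoint compact sets `S ^ p` and `T ^ q` still stay apart
when `S` and `T` are thickened slightly, and functions close to `fᵢ`, `gⱼ` in measure leave the
thickenings only on a set of small measure. So `ρ` tends to `0` at such a tuple. As `N → ∞` the
`N`-th roots of `c` and of `d` become dense in the circle, hence tuples of this kind are dense in
the product.
-/

section

open Filter Metric Topology
open scoped Pointwise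

lemma exists_disjoint_thickening_pow {G : Type*} [Monoid G] [MetricSpace G] [ContinuousMul G]
    {S T : Set G} (hS : IsCompact S) (hT : IsCompact T) {p q : ℕ}
    (hST : Disjoint (S ^ p) (T ^ q)) :
    ∃ δ > 0, Disjoint (thickening δ S ^ p) (thickening δ T ^ q) := by
  have continuous_prod (n : ℕ) : Continuous fun a : Fin n → G => (List.ofFn a).prod := by
    simp only [List.ofFn_eq_map]
    exact continuous_list_prod _ fun i _ => continuous_apply i
  let W : Set ((Fin p → G) × (Fin q → G)) := {ab | (List.ofFn ab.1).prod ≠ (List.ofFn ab.2).prod}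
  have hW : IsOpen W := isOpen_ne_fun ((continuous_prod p).comp continuous_fst)
    ((continuous_prod q).comp continuous_snd)
  have hSTW : univ.pi (fun _ => S) ×ˢ univ.pi (fun _ => T) ⊆ W := fun ab hab heq =>
    disjoint_left.1 hST (mem_pow.2 ⟨fun i => ⟨ab.1 i, hab.1 i trivial⟩, rfl⟩)
      (mem_pow.2 ⟨fun j => ⟨ab.2 j, hab.2 j trivial⟩, heq.symm⟩)
  obtain ⟨δ, hδ, hδW⟩ := ((isCompact_univ_pi fun _ => hS).prod
    (isCompact_univ_pi fun _ => hT)).exists_thickening_subset_open hW hSTW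
  refine ⟨δ, hδ, disjoint_left.2 fun z hzS hzT => ?_⟩
  obtain ⟨a, haz⟩ := mem_pow.1 hzS
  obtain ⟨b, hbz⟩ := mem_pow.1 hzT
  choose a' ha'S ha' using fun i => mem_thickening_iff.1 (a i).2
  choose b' hb'T hb' using fun j => mem_thickening_iff.1 (b j).2
  have hab : ((fun i => (a i : G), fun j => (b j : G)) : (Fin p → G) × (Fin q → G)) ∈ W :=
    hδW <| mem_thickening_iff.2 ⟨(a', b'), ⟨fun i _ => ha'S i, fun j _ => hb'T j⟩,
      max_lt ((dist_pi_lt_iff hδ).2 ha') ((dist_pi_lt_iff hδ).2 hb')⟩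
  exact hab (haz.trans hbz.symm)

section Rho

variable {X G : Type*} [Monoid G]

lemma prodSet_subset_pow {p : ℕ} {f : Fin p → X → G} {B : Set X} {U : Set G}
    (h : ∀ i, MapsTo (f i) B U) : prodSet f B ⊆ U ^ p := by
  rintro _ ⟨x, hx, rfl⟩
  exact mem_pow.2 ⟨fun i => ⟨f i (x i), h i (hx i)⟩, rfl⟩

variable [MeasurableSpace X] (μ : Measure X) {p q : ℕ}

lemma rho_nonneg (f : Fin p → X → G) (g : Fin q → X → G) : 0 ≤ rho μ f g := by
  refine Real.sInf_nonneg ?_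
  rintro _ ⟨A, -, -, rfl⟩
  exact ENNReal.toReal_nonneg

lemma rho_le_measureReal {f : Fin p → X → G} {g : Fin q → X → G} {A : Set X}
    (hA : MeasurableSet A) (h : Disjoint (prodSet f Aᶜ) (prodSet g Aᶜ)) :
    rho μ f g ≤ μ.real A := by
  refine csInf_le ⟨0, ?_⟩ ⟨A, hA, h, rfl⟩
  rintro _ ⟨B, -, -, rfl⟩
  exact ENNReal.toReal_nonneg

-- Both product sets are always `{1}`, so the infimum is over `∅`, where `sInf` on `ℝ` returns `0`.
lemma rho_fin_zero (f g : Fin 0 → X → G) : rho μ f g = 0 := by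
  have one_mem (f : Fin 0 → X → G) (B : Set X) : (1 : G) ∈ prodSet f B :=
    ⟨finZeroElim, finZeroElim, by simp⟩
  have hempty : {c : ℝ | ∃ A : Set X, MeasurableSet A ∧
      Disjoint (prodSet f Aᶜ) (prodSet g Aᶜ) ∧ c = (μ A).toReal} = ∅ := by
    refine eq_empty_of_forall_notMem ?_
    rintro _ ⟨A, -, hdisj, -⟩
    exact disjoint_left.1 hdisj (one_mem f _) (one_mem g _)
  rw [rho, hempty, Real.sInf_empty]

lemma rho_le_sum_measureReal_notMem [MeasurableSpace G] {f : Fin p → X → G} {g : Fin q → X → G}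
    (hf : ∀ i, Measurable (f i)) (hg : ∀ j, Measurable (g j)) {U V : Set G}
    (hU : MeasurableSet U) (hV : MeasurableSet V) (hUV : Disjoint (U ^ p) (V ^ q)) :
    rho μ f g ≤ ∑ i, μ.real {x | f i x ∉ U} + ∑ j, μ.real {x | g j x ∉ V} := by
  let A : Set X := (⋃ i, {x | f i x ∉ U}) ∪ ⋃ j, {x | g j x ∉ V}
  have hAmeas : MeasurableSet A :=
    (MeasurableSet.iUnion fun i => hf i hU.compl).union
      (MeasurableSet.iUnion fun j => hg j hV.compl)
  have hfU (i) : MapsTo (f i) Aᶜ U := fun x hx => by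
    by_contra h
    exact hx (Or.inl (mem_iUnion.2 ⟨i, h⟩))
  have hgV (j) : MapsTo (g j) Aᶜ V := fun x hx => by
    by_contra h
    exact hx (Or.inr (mem_iUnion.2 ⟨j, h⟩))
  calc rho μ f g
      ≤ μ.real A :=
        rho_le_measureReal μ hAmeas (hUV.mono (prodSet_subset_pow hfU) (prodSet_subset_pow hgV))
    _ ≤ μ.real (⋃ i, {x | f i x ∉ U}) + μ.real (⋃ j, {x | g j x ∉ V}) :=
        measureReal_union_le _ _
    _ ≤ ∑ i, μ.real {x | f i x ∉ U} + ∑ j, μ.real {x | g j x ∉ V} :=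
        add_le_add (measureReal_iUnion_fintype_le _) (measureReal_iUnion_fintype_le _)

end Rho

lemma dist_circleExp_le (s t : ℝ) : dist (Circle.exp s) (Circle.exp t) ≤ |s - t| := by
  have hfactor : (Circle.exp s : ℂ) - Circle.exp t =
      Circle.exp t * (Complex.exp (Complex.I * ↑(s - t)) - 1) := by
    rw [mul_sub, mul_one, Circle.coe_exp, Circle.coe_exp, ← Complex.exp_add]
    congr 2
    push_cast
    ring
  calc dist (Circle.exp s) (Circle.exp t)
      = ‖(Circle.exp s : ℂ) - Circle.exp t‖ := dist_eq_norm (Circle.exp s : ℂ) _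
    _ = ‖Complex.exp (Complex.I * ↑(s - t)) - 1‖ := by
        rw [hfactor, norm_mul, Circle.norm_coe, one_mul]
    _ ≤ |s - t| := Real.norm_exp_I_mul_ofReal_sub_one_le

/-- Rounding on the circle: `circleRound c N z` is the first `N`-th root of `c` met when moving
clockwise from `z`. For `N = 0` division by zero makes the value `1`. -/
noncomputable def circleRound (c : Circle) (N : ℕ) (z : Circle) : Circle :=
  Circle.exp ((⌊(N * Complex.arg z - Complex.arg c) / (2 * Real.pi)⌋ * (2 * Real.pi) +
    Complex.arg c) / N)

lemma measurable_circleRound (c : Circle) (N : ℕ) : Measurable (circleRound c N) := by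
  have hcoe : Continuous fun z : Circle => (z : ℂ) := continuous_subtype_val
  have harg : Measurable fun z : Circle => Complex.arg z :=
    Complex.measurable_arg.comp hcoe.measurable
  have hfloor : Measurable fun z : Circle =>
      ⌊(N * Complex.arg z - Complex.arg c) / (2 * Real.pi)⌋ :=
    (((harg.const_mul _).sub_const _).div_const _).floor
  have hcast : Measurable fun z : Circle =>
      (⌊(N * Complex.arg z - Complex.arg c) / (2 * Real.pi)⌋ : ℝ) :=
    measurable_from_top.comp hfloor
  exact Circle.exp.continuous.measurable.comp (((hcast.mul_const _).add_const _).div_const _)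

lemma circleRound_pow (c : Circle) {N : ℕ} (hN : N ≠ 0) (z : Circle) :
    circleRound c N z ^ N = c := by
  have hN' : (N : ℝ) ≠ 0 := Nat.cast_ne_zero.2 hN
  rw [circleRound, ← Circle.exp_nsmul, nsmul_eq_mul, mul_div_cancel₀ _ hN', Circle.exp_add,
    Circle.exp_int_mul_two_pi, one_mul, Circle.exp_arg]

lemma dist_circleRound_le (c : Circle) {N : ℕ} (hN : N ≠ 0) (z : Circle) :
    dist z (circleRound c N z) ≤ 2 * Real.pi / N := by
  have : (N : ℝ) ≠ 0 := Nat.cast_ne_zero.2 hN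
  set t : ℝ := (N * Complex.arg z - Complex.arg c) / (2 * Real.pi) with ht
  have hangle : Complex.arg z - (⌊t⌋ * (2 * Real.pi) + Complex.arg c) / N =
      Int.fract t * (2 * Real.pi / N) := by
    rw [Int.fract, ht]
    field_simp
    ring
  calc dist z (circleRound c N z)
      = dist (Circle.exp (Complex.arg z)) (circleRound c N z) := by rw [Circle.exp_arg]
    _ ≤ |Int.fract t * (2 * Real.pi / N)| := hangle ▸ dist_circleExp_le _ _
    _ = Int.fract t * (2 * Real.pi / N) :=
        abs_of_nonneg (mul_nonneg (Int.fract_nonneg t) (by positivity))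
    _ ≤ 2 * Real.pi / N := mul_le_of_le_one_left (by positivity) (Int.fract_lt_one t).le

lemma exists_circle_pow_ne_pow {p q : ℕ} (h : p ≠ 0 ∨ q ≠ 0) :
    ∃ c d : Circle, c ^ p ≠ d ^ q := by
  have exists_pow_ne_one {r : ℕ} (hr : r ≠ 0) : ∃ c : Circle, c ^ r ≠ 1 := by
    refine ⟨Circle.exp (Real.pi / r), ?_⟩
    rw [← Circle.exp_nsmul, nsmul_eq_mul, mul_div_cancel₀ _ (Nat.cast_ne_zero.2 hr)]
    exact Circle.exp_pi_ne_one
  rcases h with hp | hq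
  · obtain ⟨c, hc⟩ := exists_pow_ne_one hp
    exact ⟨c, 1, by rwa [one_pow]⟩
  · obtain ⟨d, hd⟩ := exists_pow_ne_one hq
    exact ⟨1, d, by rw [one_pow]; exact hd.symm⟩

lemma pow_setOf_pow_eq_subset {M : Type*} [CommMonoid M] (c : M) (N p : ℕ) :
    {z : M | z ^ N = c} ^ p ⊆ {z | z ^ N = c ^ p} := by
  intro z hz
  obtain ⟨a, rfl⟩ := mem_pow.1 hz
  rw [mem_ofPred_eq, List.prod_ofFn, ← Finset.prod_pow, Finset.prod_congr rfl fun i _ => (a i).2,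
    Finset.prod_const, Finset.card_univ, Fintype.card_fin]

lemma disjoint_setOf_pow_eq_pow {M : Type*} [CommMonoid M] {c d : M} {p q : ℕ}
    (hcd : c ^ p ≠ d ^ q) (N : ℕ) :
    Disjoint ({z : M | z ^ N = c} ^ p) ({z : M | z ^ N = d} ^ q) :=
  disjoint_left.2 fun _ hzc hzd => hcd <|
    (pow_setOf_pow_eq_subset c N p hzc).symm.trans (pow_setOf_pow_eq_subset d N q hzd)

section L0

variable {X : Type*} [MeasurableSpace X] {μ : Measure X}

lemma L0dist_eq_integral_dist (f g : X →ₘ[μ] Circle) :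
    L0dist μ f g = ∫ x, dist (f x) (g x) ∂μ :=
  integral_congr_ae <| .of_forall fun x => (dist_eq_norm (f x : ℂ) (g x)).symm

lemma L0dist_self (f : X →ₘ[μ] Circle) : L0dist μ f f = 0 := by
  simp [L0dist_eq_integral_dist]

lemma L0dist_nonneg (f g : X →ₘ[μ] Circle) : 0 ≤ L0dist μ f g :=
  integral_nonneg fun _ => norm_nonneg _

variable [IsFiniteMeasure μ]

lemma integrable_dist_circle (f g : X →ₘ[μ] Circle) :
    Integrable (fun x => dist (f x) (g x)) μ := by
  refine .of_bound (f.measurable.dist g.measurable).aestronglyMeasurable 2 (.of_forall fun x => ?_)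
  calc ‖dist (f x) (g x)‖
      = ‖(f x : ℂ) - g x‖ := by
        rw [Real.norm_of_nonneg dist_nonneg]
        exact dist_eq_norm (f x : ℂ) (g x)
    _ ≤ ‖(f x : ℂ)‖ + ‖(g x : ℂ)‖ := norm_sub_le _ _
    _ = 2 := by rw [Circle.norm_coe, Circle.norm_coe, one_add_one_eq_two]

lemma L0dist_triangle (f g h : X →ₘ[μ] Circle) :
    L0dist μ f h ≤ L0dist μ f g + L0dist μ g h := by
  simp only [L0dist_eq_integral_dist]
  rw [← integral_add (integrable_dist_circle f g) (integrable_dist_circle g h)]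
  exact integral_mono (integrable_dist_circle f h)
    ((integrable_dist_circle f g).add (integrable_dist_circle g h))
    fun x => dist_triangle (f x) (g x) (h x)

lemma tendsto_nhds_iff_tendsto_L0dist {ι : Type*} {u : ι → X →ₘ[μ] Circle} {F : Filter ι}
    {f : X →ₘ[μ] Circle} :
    Tendsto u F (𝓝 f) ↔ Tendsto (fun i => L0dist μ f (u i)) F (𝓝 0) := by
  constructor
  · intro hu
    refine tendsto_order.2 ⟨fun a ha => .of_forall fun i => ha.trans_le (L0dist_nonneg f (u i)),
      fun ε hε => ?_⟩
    have hopen : IsOpen {g | L0dist μ f g < ε} :=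
      TopologicalSpace.isOpen_generateFrom_of_mem ⟨f, ε, hε, rfl⟩
    exact hu.eventually (hopen.mem_nhds ((L0dist_self f).trans_lt hε))
  · refine fun hu => TopologicalSpace.tendsto_nhds_generateFrom_iff.2 ?_
    rintro _ ⟨g, ε, -, rfl⟩ (hgf : L0dist μ g f < ε)
    filter_upwards [hu.eventually (gt_mem_nhds (sub_pos.2 hgf))] with i hi
    exact (L0dist_triangle g f (u i)).trans_lt (lt_sub_iff_add_lt'.1 hi)

lemma measureReal_notMem_thickening_le {S : Set Circle} {δ : ℝ} (hδ : 0 < δ)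
    {f : X →ₘ[μ] Circle} (hf : ∀ᵐ x ∂μ, f x ∈ S) (g : X →ₘ[μ] Circle) :
    μ.real {x | g x ∉ thickening δ S} ≤ L0dist μ f g / δ := by
  have hfar : {x | g x ∉ thickening δ S} ≤ᵐ[μ] {x | δ ≤ dist (f x) (g x)} := by
    filter_upwards [hf] with x hx hgx
    exact not_lt.1 fun h => hgx <| mem_thickening_iff.2 ⟨f x, hx, dist_comm (f x) (g x) ▸ h⟩
  calc μ.real {x | g x ∉ thickening δ S}
      ≤ μ.real {x | δ ≤ dist (f x) (g x)} :=
        ENNReal.toReal_mono (measure_ne_top _ _) (measure_mono_ae hfar)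
    _ ≤ L0dist μ f g / δ := by
        rw [le_div_iff₀' hδ, L0dist_eq_integral_dist]
        exact mul_meas_ge_le_integral_of_nonneg (.of_forall fun _ => dist_nonneg)
          (integrable_dist_circle f g) δ

lemma tendsto_measureReal_notMem_thickening {S : Set Circle} {δ : ℝ} (hδ : 0 < δ)
    {f : X →ₘ[μ] Circle} (hf : ∀ᵐ x ∂μ, f x ∈ S) :
    Tendsto (fun g : X →ₘ[μ] Circle => μ.real {x | g x ∉ thickening δ S}) (𝓝 f) (𝓝 0) := by
  have hdist : Tendsto (fun g => L0dist μ f g / δ) (𝓝 f) (𝓝 0) := by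
    simpa only [zero_div, id_eq] using
      (tendsto_nhds_iff_tendsto_L0dist.1 (tendsto_id (x := 𝓝 f))).div_const δ
  exact squeeze_zero (fun _ => measureReal_nonneg)
    (measureReal_notMem_thickening_le hδ hf) hdist

lemma tendsto_rho_nhds_zero {S T : Set Circle} (hS : IsCompact S) (hT : IsCompact T) {p q : ℕ}
    (hST : Disjoint (S ^ p) (T ^ q)) {F : Fin p → X →ₘ[μ] Circle} {G : Fin q → X →ₘ[μ] Circle}
    (hF : ∀ i, ∀ᵐ x ∂μ, F i x ∈ S) (hG : ∀ j, ∀ᵐ x ∂μ, G j x ∈ T) :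
    Tendsto (fun fg : (Fin p → X →ₘ[μ] Circle) × (Fin q → X →ₘ[μ] Circle) =>
      rho μ (fun i => ⇑(fg.1 i)) (fun j => ⇑(fg.2 j))) (𝓝 (F, G)) (𝓝 0) := by
  obtain ⟨δ, hδ, hdisj⟩ := exists_disjoint_thickening_pow hS hT hST
  have hleft (i) : Tendsto (fun fg : (Fin p → X →ₘ[μ] Circle) × (Fin q → X →ₘ[μ] Circle) =>
      μ.real {x | fg.1 i x ∉ thickening δ S}) (𝓝 (F, G)) (𝓝 0) :=
    (tendsto_measureReal_notMem_thickening hδ (hF i)).comp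
      ((continuous_apply i).comp continuous_fst).continuousAt
  have hright (j) : Tendsto (fun fg : (Fin p → X →ₘ[μ] Circle) × (Fin q → X →ₘ[μ] Circle) =>
      μ.real {x | fg.2 j x ∉ thickening δ T}) (𝓝 (F, G)) (𝓝 0) :=
    (tendsto_measureReal_notMem_thickening hδ (hG j)).comp
      ((continuous_apply j).comp continuous_snd).continuousAt
  refine squeeze_zero (fun fg => rho_nonneg μ _ _) (fun fg => rho_le_sum_measureReal_notMem μ
    (fun i => (fg.1 i).measurable) (fun j => (fg.2 j).measurable)
    isOpen_thickening.measurableSet isOpen_thickening.measurableSet hdisj) ?_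
  simpa only [Finset.sum_const_zero, add_zero] using
    (tendsto_finsetSum Finset.univ fun i _ => hleft i).add
      (tendsto_finsetSum Finset.univ fun j _ => hright j)

lemma exists_seq_tendsto_ae_pow_eq (c : Circle) (f : X →ₘ[μ] Circle) :
    ∃ u : ℕ → X →ₘ[μ] Circle, Tendsto u atTop (𝓝 f) ∧
      ∀ N, N ≠ 0 → ∀ᵐ x ∂μ, u N x ^ N = c := by
  let u (N : ℕ) : X →ₘ[μ] Circle := f.compMeasurable _ (measurable_circleRound c N)
  have hu (N : ℕ) : ∀ᵐ x ∂μ, u N x = circleRound c N (f x) :=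
    f.coeFn_compMeasurable _ (measurable_circleRound c N)
  have hdist (N : ℕ) (hN : N ≠ 0) : L0dist μ f (u N) ≤ 2 * Real.pi / N * μ.real univ := by
    rw [L0dist_eq_integral_dist, mul_comm, ← smul_eq_mul, ← integral_const]
    refine integral_mono_ae (integrable_dist_circle _ _) (integrable_const _) ?_
    filter_upwards [hu N] with x hx
    exact hx ▸ dist_circleRound_le c hN (f x)
  have hbound : Tendsto (fun N : ℕ => 2 * Real.pi / N * μ.real univ) atTop (𝓝 0) := by
    simpa only [zero_mul] using
      (tendsto_const_div_atTop_nhds_zero_nat (2 * Real.pi)).mul_const (μ.real univ)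
  refine ⟨u, tendsto_nhds_iff_tendsto_L0dist.2 (squeeze_zero'
    (.of_forall fun N => L0dist_nonneg f (u N))
    ((eventually_ne_atTop 0).mono hdist) hbound), fun N hN => ?_⟩
  filter_upwards [hu N] with x hx
  rw [hx, circleRound_pow c hN]

variable {ι κ : Type*}

lemma dense_setOf_ae_pow_eq (c d : Circle) :
    Dense {fg : (ι → X →ₘ[μ] Circle) × (κ → X →ₘ[μ] Circle) |
      ∃ N : ℕ, (∀ i, ∀ᵐ x ∂μ, fg.1 i x ^ N = c) ∧ ∀ j, ∀ᵐ x ∂μ, fg.2 j x ^ N = d} := by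
  rintro ⟨f, g⟩
  choose u hu hu_pow using fun i => exists_seq_tendsto_ae_pow_eq c (f i)
  choose v hv hv_pow using fun j => exists_seq_tendsto_ae_pow_eq d (g j)
  refine mem_closure_of_tendsto
    ((tendsto_pi_nhds.2 hu).prodMk_nhds (tendsto_pi_nhds.2 hv)) ?_
  filter_upwards [eventually_ne_atTop 0] with N hN
  exact ⟨N, fun i => hu_pow i N hN, fun j => hv_pow j N hN⟩

theorem statement3_general {ε : ℝ} (hε : 0 < ε) {p q : ℕ} (k : Fin p → ι) (l : Fin q → κ) :
    IsNowhereDense {fg : (ι → X →ₘ[μ] Circle) × (κ → X →ₘ[μ] Circle) |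
      ε ≤ rho μ (fun i => ⇑(fg.1 (k i))) (fun j => ⇑(fg.2 (l j)))} := by
  by_cases hpq : p = 0 ∧ q = 0
  · obtain ⟨rfl, rfl⟩ := hpq
    simp only [rho_fin_zero, hε.not_ge, ofPred_false, isNowhereDense_empty]
  obtain ⟨c, d, hcd⟩ := exists_circle_pow_ne_pow (not_and_or.1 hpq)
  refine interior_eq_empty_iff_dense_compl.2 ((dense_setOf_ae_pow_eq c d).mono ?_)
  rintro ⟨F, G⟩ ⟨N, hF, hG⟩
  have hclosed (a : Circle) : IsClosed {z : Circle | z ^ N = a} :=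
    isClosed_eq (continuous_pow N) continuous_const
  have hreindex : Continuous fun fg : (ι → X →ₘ[μ] Circle) × (κ → X →ₘ[μ] Circle) =>
      (fg.1 ∘ k, fg.2 ∘ l) := by
    fun_prop
  have hrho : ∀ᶠ fg : (ι → X →ₘ[μ] Circle) × (κ → X →ₘ[μ] Circle) in 𝓝 (F, G),
      rho μ (fun i => ⇑(fg.1 (k i))) (fun j => ⇑(fg.2 (l j))) < ε :=
    ((tendsto_rho_nhds_zero (hclosed c).isCompact (hclosed d).isCompact
      (disjoint_setOf_pow_eq_pow hcd N) (fun i => hF (k i)) fun j => hG (l j)).comp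
      hreindex.continuousAt).eventually (gt_mem_nhds hε)
  simpa only [mem_compl_iff, mem_closure_iff_frequently, not_frequently, mem_ofPred_eq, not_le]
    using hrho

end L0

end

/-- For `(X,μ)` a standard Borel space with a non-atomic Borel probability measure, every
`k ≥ 1`, `m, n ∈ ℕ` and all indices `1 ≤ k₁,…,k_p ≤ m`, `1 ≤ l₁,…,l_q ≤ n`, the set
`E_k = {(f₁,…,f_m,g₁,…,g_n) : ρ_{p,q}(f_{k₁},…,f_{k_p},g_{l₁},…,g_{l_q}) ≥ 1/k}` is nowhere
dense in `L⁰(μ,𝕋)^{m+n}`. -/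
theorem statement3 {X : Type*} [MeasurableSpace X] [StandardBorelSpace X]
    (μ : Measure X) [IsProbabilityMeasure μ] [NullSingletonClass μ]
    (K m n p q : ℕ) (hK : 0 < K) (k : Fin p → Fin m) (l : Fin q → Fin n) :
    IsNowhereDense {fg : (Fin m → (X →ₘ[μ] Circle)) × (Fin n → (X →ₘ[μ] Circle)) |
        (1 : ℝ) / K ≤ rho μ (fun i => ⇑(fg.1 (k i))) (fun j => ⇑(fg.2 (l j)))} :=
  statement3_general (by positivity) k l
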